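/- arXiv:1006.0218 — 4 statements merged into one kernel-verified Lean document; each statement's English description precedes it below -/
import Mathlib

section
/- Every template Γ satisfies l(Γ) − ε(Γ) ≤ δ(Γ). -/
/-!
An edge `e` passes strictly over `j(e) - i(e) - 1` vertices, and this is at most its contribution
`(j(e) - i(e))·w(e) - 1` to the cogenus. Since the edges of a template jointly pass over all the
vertices `1, …, l - 1`, a union bound (`card_le_sum_of_cover`) gives `l - 1 ≤ δ`, which settles the
case `ε = 1`. An edge of weight at least `2` contributes at least `j(e) - i(e)`, so it also pays for
its right endpoint. When `ε = 0` some such edge arrives at `l`, so the vertex `l` is paid for too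
and `l ≤ δ`.
-/

/-- A *template* `Γ = (l, E)`: `l ≥ 1` is the length and `E` is a nonempty finite multiset of
weighted edges `e = (i(e), j(e), w(e))` with `0 ≤ i(e) < j(e) ≤ l`, `w(e) ≥ 1`, such that every
short edge (`j(e) = i(e) + 1`) has weight `≥ 2`, and every vertex `1 ≤ v ≤ l - 1` is covered by
some edge (`i(e) < v < j(e)`). -/
structure Template where
  /-- the length `l(Γ)` -/
  l : ℕ
  /-- the multiset of edges `(i(e), j(e), w(e))` -/
  E : Multiset (ℕ × ℕ × ℕ)
  hl : 1 ≤ l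
  hE : E ≠ 0
  h_edge : ∀ e ∈ E, e.1 < e.2.1 ∧ e.2.1 ≤ l ∧ 1 ≤ e.2.2
  h_short : ∀ e ∈ E, e.2.1 = e.1 + 1 → 2 ≤ e.2.2
  h_cover : ∀ v : ℕ, 1 ≤ v → v ≤ l - 1 → ∃ e ∈ E, e.1 < v ∧ v < e.2.1

namespace Template

/-- The cogenus `δ(Γ) = ∑_{e ∈ E} ((j(e) - i(e))·w(e) - 1)`. -/
def delta (Γ : Template) : ℕ :=
  (Γ.E.map (fun e => (e.2.1 - e.1) * e.2.2 - 1)).sum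

/-- `κ_v(Γ)`: the sum of the weights of the edges `e` with `i(e) < v ≤ j(e)`. -/
def kappa (Γ : Template) (v : ℕ) : ℕ :=
  ((Γ.E.filter (fun e => e.1 < v ∧ v ≤ e.2.1)).map (fun e => e.2.2)).sum

/-- `k_min(Γ) = max_{1 ≤ v ≤ l} (κ_v(Γ) - v + 1)`. -/
def kmin (Γ : Template) : ℤ :=
  (Finset.Icc 1 Γ.l).sup' (Finset.nonempty_Icc.mpr Γ.hl)
    (fun v => (Γ.kappa v : ℤ) - v + 1)

/-- `ε(Γ) = 1` if every edge arriving at `l` has weight `1`, and `ε(Γ) = 0` otherwise. -/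
def eps (Γ : Template) : ℕ :=
  if ∀ e ∈ Γ.E, e.2.1 = Γ.l → e.2.2 = 1 then 1 else 0

/-- `j₀(Γ)`: the smallest `v ∈ {1, …, l}` with `κ_v(Γ) = k_min(Γ) + v - 1`. -/
noncomputable def j0 (Γ : Template) : ℕ :=
  sInf {v : ℕ | 1 ≤ v ∧ v ≤ Γ.l ∧ (Γ.kappa v : ℤ) = Γ.kmin + v - 1}

/-- `s(Γ)`: the number of edges (with multiplicity) from `j₀(Γ) - 1` to `j₀(Γ)`. -/
noncomputable def s (Γ : Template) : ℕ :=
  (Γ.E.filter (fun e => e.1 = Γ.j0 - 1 ∧ e.2.1 = Γ.j0)).card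

end Template

/-- The vertices in `(i(e), j(e)]` that an edge `e` is made to account for: those it passes strictly
over, together with its right endpoint if its weight is at least `2`. -/
def paidVertices (e : ℕ × ℕ × ℕ) : Finset ℕ :=
  if 2 ≤ e.2.2 then Finset.Ioc e.1 e.2.1 else Finset.Ioo e.1 e.2.1

lemma card_paidVertices_le (e : ℕ × ℕ × ℕ) (hij : e.1 < e.2.1) (hw : 1 ≤ e.2.2) :
    (paidVertices e).card ≤ (e.2.1 - e.1) * e.2.2 - 1 := by
  unfold paidVertices
  split_ifs with h
  · rw [Nat.card_Ioc]
    have := Nat.mul_le_mul_left (e.2.1 - e.1) h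
    omega
  · rw [Nat.card_Ioo]
    have := Nat.mul_le_mul_left (e.2.1 - e.1) hw
    omega

lemma mem_paidVertices_of_lt {e : ℕ × ℕ × ℕ} {v : ℕ} (h₁ : e.1 < v) (h₂ : v < e.2.1) :
    v ∈ paidVertices e := by
  unfold paidVertices
  split_ifs
  · exact Finset.mem_Ioc.2 ⟨h₁, h₂.le⟩
  · exact Finset.mem_Ioo.2 ⟨h₁, h₂⟩

/-- Union bound for a finite set covered by a multiset-indexed family. -/
lemma card_le_sum_of_cover {α β : Type*} [DecidableEq β] (f : α → Finset β) (c : α → ℕ)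
    (E : Multiset α) (hc : ∀ e ∈ E, (f e).card ≤ c e) (S : Finset β)
    (hS : ∀ v ∈ S, ∃ e ∈ E, v ∈ f e) : S.card ≤ (E.map c).sum := by
  induction E using Multiset.induction generalizing S with
  | empty =>
    have : S = ∅ := Finset.eq_empty_of_forall_notMem fun v hv => by simpa using hS v hv
    simp [this]
  | cons a E ih =>
    have h := ih (fun e he => hc e (Multiset.mem_cons_of_mem he)) (S \ f a) (by
      intro v hv
      obtain ⟨hvS, hva⟩ := Finset.mem_sdiff.1 hv
      obtain ⟨e, he, hve⟩ := hS v hvS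
      rcases Multiset.mem_cons.1 he with rfl | he
      · exact absurd hve hva
      · exact ⟨e, he, hve⟩)
    have ha := hc a (Multiset.mem_cons_self a E)
    have hle := Finset.card_le_card_sdiff_add_card (s := S) (t := f a)
    rw [Multiset.map_cons, Multiset.sum_cons]
    omega

/-- Any set of vertices paid for by the edges of `Γ` has at most `δ(Γ)` elements. -/
lemma Template.card_le_delta (Γ : Template) (S : Finset ℕ)
    (hS : ∀ v ∈ S, ∃ e ∈ Γ.E, v ∈ paidVertices e) : S.card ≤ Γ.delta :=
  card_le_sum_of_cover paidVertices _ Γ.E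
    (fun e he => card_paidVertices_le e (Γ.h_edge e he).1 (Γ.h_edge e he).2.2) S hS

lemma Template.exists_paidVertices (Γ : Template) {v : ℕ} (h₁ : 1 ≤ v) (h₂ : v ≤ Γ.l - 1) :
    ∃ e ∈ Γ.E, v ∈ paidVertices e := by
  obtain ⟨e, he, hi, hj⟩ := Γ.h_cover v h₁ h₂
  exact ⟨e, he, mem_paidVertices_of_lt hi hj⟩

/-- Every template `Γ` satisfies `l(Γ) - ε(Γ) ≤ δ(Γ)`. -/
theorem template_length_le_delta (Γ : Template) :
    (Γ.l : ℤ) - Γ.eps ≤ Γ.delta := by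
  unfold Template.eps
  split_ifs with h
  · have := Γ.card_le_delta (Finset.Icc 1 (Γ.l - 1)) fun v hv =>
      Γ.exists_paidVertices (Finset.mem_Icc.1 hv).1 (Finset.mem_Icc.1 hv).2
    rw [Nat.card_Icc] at this
    omega
  · push Not at h
    obtain ⟨e, he, hl, hw⟩ := h
    obtain ⟨hij, -, hw₁⟩ := Γ.h_edge e he
    have := Γ.card_le_delta (Finset.Icc 1 Γ.l) fun v hv => by
      obtain ⟨hv₁, hvl⟩ := Finset.mem_Icc.1 hv
      rcases hvl.eq_or_lt with rfl | hlt
      · refine ⟨e, he, ?_⟩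
        rw [paidVertices, if_pos (by omega)]
        exact Finset.mem_Ioc.2 ⟨by omega, hl.ge⟩
      · exact Γ.exists_paidVertices hv₁ (by omega)
    rw [Nat.card_Icc] at this
    omega
end

section
/- Every template Γ satisfies k_min(Γ) − s(Γ) + l(Γ) − ε(Γ) ≤ δ(Γ) + 1. -/
namespace Template

/-- Such vertices lie strictly between `max a j` and `b`; the truncated right-hand side is `0` when
there is no room. -/
theorem card_inner_le (a b j l : ℕ) :
    ((Finset.Ioo j l).filter (fun v => a < v ∧ v < b)).card ≤ b - max a j - 1 := by
  rw [← Nat.card_Ioo]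
  apply Finset.card_le_card
  intro v hv
  simp only [Finset.mem_filter, Finset.mem_Ioo] at hv ⊢
  omega

/-- The estimate for one edge `(a, b, w)`; the summand for `b = l ∧ 2 ≤ w` is the improvement
available when an edge of weight `≥ 2` arrives at `l`. -/
theorem edge_estimate {a b w j l : ℕ} (hj : 1 ≤ j) (hjl : j < l) (hab : a < b) (hw : 1 ≤ w)
    (hs : b = a + 1 → 2 ≤ w) :
    ((Finset.Ioo j l).filter (fun v => a < v ∧ v < b)).card
      + (if a < j ∧ j ≤ b then w else 0) + (if b = l ∧ 2 ≤ w then 1 else 0)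
      ≤ ((b - a) * w - 1) + (if a = j - 1 ∧ b = j then 1 else 0) := by
  have hc := card_inner_le a b j l
  obtain ⟨d, rfl⟩ : ∃ d, b = a + d + 1 := ⟨b - a - 1, by omega⟩
  have e1 : (a + d + 1 - a) * w = d * w + w := by
    rw [show a + d + 1 - a = d + 1 by omega]; ring
  have h1 : d ≤ d * w := Nat.le_mul_of_pos_right d hw
  have h2 : 2 ≤ w → 2 * d ≤ d * w := fun h => by nlinarith
  have h3 : d = 0 ∨ w ≤ d * w := by
    rcases Nat.eq_zero_or_pos d with h | h
    · exact Or.inl h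
    · exact Or.inr (Nat.le_mul_of_pos_left w h)
  rw [e1]
  generalize d * w = p at *
  split_ifs <;> omega

open Classical in
/-- The sum of the estimates over a multiset of edges, in which the individual numbers of inner
vertices are replaced by the size of the union of the corresponding sets. -/
theorem sum_estimate {j l : ℕ} (hj : 1 ≤ j) (hjl : j < l) (S : Multiset (ℕ × ℕ × ℕ))
    (hS : ∀ e ∈ S, e.1 < e.2.1 ∧ 1 ≤ e.2.2 ∧ (e.2.1 = e.1 + 1 → 2 ≤ e.2.2)) :
    ((Finset.Ioo j l).filter (fun v => ∃ e ∈ S, e.1 < v ∧ v < e.2.1)).card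
      + ((S.filter (fun e => e.1 < j ∧ j ≤ e.2.1)).map (fun e => e.2.2)).sum
      + (S.filter (fun e => e.2.1 = l ∧ 2 ≤ e.2.2)).card
      ≤ (S.map (fun e => (e.2.1 - e.1) * e.2.2 - 1)).sum
        + (S.filter (fun e => e.1 = j - 1 ∧ e.2.1 = j)).card := by
  induction S using Multiset.induction_on with
  | empty => simp
  | cons e S ih =>
    have ih := ih fun x hx => hS x (Multiset.mem_cons_of_mem hx)
    obtain ⟨h1, h2, h3⟩ := hS e (Multiset.mem_cons_self e S)
    have he := edge_estimate hj hjl h1 h2 h3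
    have hcard : ((Finset.Ioo j l).filter (fun v => ∃ x ∈ e ::ₘ S, x.1 < v ∧ v < x.2.1)).card
        ≤ ((Finset.Ioo j l).filter (fun v => e.1 < v ∧ v < e.2.1)).card
        + ((Finset.Ioo j l).filter (fun v => ∃ x ∈ S, x.1 < v ∧ v < x.2.1)).card := by
      refine le_trans (Finset.card_le_card ?_) (Finset.card_union_le _ _)
      intro v hv
      simp only [Finset.mem_union, Finset.mem_filter, Multiset.mem_cons, exists_eq_or_imp] at hv ⊢
      tauto
    simp only [Multiset.filter_cons, Multiset.map_add, Multiset.sum_add, Multiset.card_add,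
      Multiset.map_cons, Multiset.sum_cons,
      apply_ite (Multiset.map (fun e : ℕ × ℕ × ℕ => e.2.2)), apply_ite Multiset.sum,
      apply_ite Multiset.card, Multiset.map_singleton, Multiset.sum_singleton,
      Multiset.card_singleton, Multiset.map_zero, Multiset.sum_zero, Multiset.card_zero]
    omega

/-- The form of the estimate used in the boundary case `j = l`, where there are no inner vertices
to account for. -/
theorem sum_estimate_last {j : ℕ} (hj : 1 ≤ j) (S : Multiset (ℕ × ℕ × ℕ))
    (hS : ∀ e ∈ S, e.1 < e.2.1 ∧ 1 ≤ e.2.2 ∧ (e.2.1 = e.1 + 1 → 2 ≤ e.2.2)) :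
    ((S.filter (fun e => e.1 < j ∧ j ≤ e.2.1)).map (fun e => e.2.2)).sum
      ≤ (S.map (fun e => (e.2.1 - e.1) * e.2.2 - 1)).sum
        + (S.filter (fun e => e.1 = j - 1 ∧ e.2.1 = j)).card := by
  -- `sum_estimate` with `j + 1` in place of `l`; its two extra terms on the left are dropped.
  have := sum_estimate hj (Nat.lt_succ_self j) S hS
  omega

theorem j0_spec (Γ : Template) :
    1 ≤ Γ.j0 ∧ Γ.j0 ≤ Γ.l ∧ (Γ.kappa Γ.j0 : ℤ) = Γ.kmin + Γ.j0 - 1 := by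
  apply Nat.sInf_mem
    (s := {v : ℕ | 1 ≤ v ∧ v ≤ Γ.l ∧ (Γ.kappa v : ℤ) = Γ.kmin + v - 1})
  obtain ⟨v, hv, h⟩ := Finset.exists_mem_eq_sup' (Finset.nonempty_Icc.mpr Γ.hl)
    (fun v => (Γ.kappa v : ℤ) - v + 1)
  rw [Finset.mem_Icc] at hv
  refine ⟨v, hv.1, hv.2, ?_⟩
  have h : Γ.kmin = (Γ.kappa v : ℤ) - v + 1 := h
  omega

end Template

/-- Every template `Γ` satisfies `k_min(Γ) - s(Γ) + l(Γ) - ε(Γ) ≤ δ(Γ) + 1`. -/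
theorem template_technical_inequality (Γ : Template) :
    Γ.kmin - Γ.s + Γ.l - Γ.eps ≤ (Γ.delta : ℤ) + 1 := by
  classical
  obtain ⟨hj, hjl, hk⟩ := Γ.j0_spec
  have hS : ∀ e ∈ Γ.E, e.1 < e.2.1 ∧ 1 ≤ e.2.2 ∧ (e.2.1 = e.1 + 1 → 2 ≤ e.2.2) :=
    fun e he => ⟨(Γ.h_edge e he).1, (Γ.h_edge e he).2.2, Γ.h_short e he⟩
  suffices Γ.kappa Γ.j0 + (Γ.l - Γ.j0) ≤ Γ.delta + Γ.s + Γ.eps by omega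
  rcases hjl.eq_or_lt with hEq | hlt
  · have h : Γ.kappa Γ.j0 ≤ Γ.delta + Γ.s := Template.sum_estimate_last hj Γ.E hS
    omega
  · have h := Template.sum_estimate hj hlt Γ.E hS
    have hcov : (Finset.Ioo Γ.j0 Γ.l).filter (fun v => ∃ e ∈ Γ.E, e.1 < v ∧ v < e.2.1)
        = Finset.Ioo Γ.j0 Γ.l := by
      apply Finset.filter_true_of_mem
      intro v hv
      rw [Finset.mem_Ioo] at hv
      exact Γ.h_cover v (by omega) (by omega)
    rw [hcov, Nat.card_Ioo] at h
    change _ + Γ.kappa Γ.j0 + _ ≤ Γ.delta + Γ.s at h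
    have heps : 1 ≤ (Γ.E.filter (fun e => e.2.1 = Γ.l ∧ 2 ≤ e.2.2)).card + Γ.eps := by
      unfold Template.eps
      split_ifs with hall
      · omega
      · push Not at hall
        obtain ⟨e, he, hel, hw⟩ := hall
        have := (Γ.h_edge e he).2.2
        have : 0 < (Γ.E.filter (fun e => e.2.1 = Γ.l ∧ 2 ≤ e.2.2)).card :=
          Multiset.card_pos_iff_exists_mem.mpr
            ⟨e, Multiset.mem_filter.mpr ⟨he, hel, by omega⟩⟩
        omega
    omega
end

section
/- For every integer δ₀ ≥ 1, the set of templates Γ with cogenus δ(Γ) = δ₀ is finite. (Two templates are equal if and only if they have the same length l and the same multiset E of weighted edges.) -/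
namespace Template

/-- A finite set of vertices covered by the interiors of the edges in `E` has at most as many
elements as the cogenus sum of `E`. -/
lemma card_le_of_covered (E : Multiset (ℕ × ℕ × ℕ)) :
    ∀ s : Finset ℕ, (∀ e ∈ E, 1 ≤ e.2.2) → (∀ v ∈ s, ∃ e ∈ E, e.1 < v ∧ v < e.2.1) →
      s.card ≤ (E.map (fun e => (e.2.1 - e.1) * e.2.2 - 1)).sum := by
  induction E using Multiset.induction with
  | empty =>
    intro s _ hs
    have : s = ∅ := Finset.eq_empty_of_forall_notMem fun v hv => by simpa using hs v hv
    simp [this]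
  | cons a E ih =>
    intro s hw hs
    have h1 : (s \ Finset.Ioo a.1 a.2.1).card ≤ _ :=
      ih (s \ Finset.Ioo a.1 a.2.1) (fun e he => hw e (Multiset.mem_cons_of_mem he)) (by
        intro v hv
        rw [Finset.mem_sdiff, Finset.mem_Ioo] at hv
        obtain ⟨e, he, h⟩ := hs v hv.1
        rcases Multiset.mem_cons.1 he with rfl | he
        · exact absurd h hv.2
        · exact ⟨e, he, h⟩)
    have h2 : s.card ≤ (s \ Finset.Ioo a.1 a.2.1).card + (Finset.Ioo a.1 a.2.1).card :=
      Finset.card_le_card_sdiff_add_card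
    have h3 : a.2.1 - a.1 ≤ (a.2.1 - a.1) * a.2.2 :=
      Nat.le_mul_of_pos_right _ (hw a (Multiset.mem_cons_self a E))
    rw [Nat.card_Ioo] at h2
    rw [Multiset.map_cons, Multiset.sum_cons]
    omega

lemma l_le (Γ : Template) : Γ.l ≤ Γ.delta + 1 := by
  have h := card_le_of_covered Γ.E (Finset.Icc 1 (Γ.l - 1)) (fun e he => (Γ.h_edge e he).2.2)
    (fun v hv => by rw [Finset.mem_Icc] at hv; exact Γ.h_cover v hv.1 hv.2)
  rw [Nat.card_Icc] at h
  change _ ≤ Γ.delta at h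
  omega

lemma one_le_edge (Γ : Template) (e : ℕ × ℕ × ℕ) (he : e ∈ Γ.E) :
    1 ≤ (e.2.1 - e.1) * e.2.2 - 1 := by
  obtain ⟨h1, -, h3⟩ := Γ.h_edge e he
  by_cases h : e.2.1 = e.1 + 1
  · have := Γ.h_short e he h
    simp only [h, Nat.add_sub_cancel_left, one_mul]
    omega
  · have : 2 * 1 ≤ (e.2.1 - e.1) * e.2.2 := Nat.mul_le_mul (by omega) h3
    omega

lemma card_le (Γ : Template) : Γ.E.card ≤ Γ.delta := by
  have h := Multiset.card_nsmul_le_sum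
    (s := Γ.E.map (fun e => (e.2.1 - e.1) * e.2.2 - 1)) (a := 1) (by
      intro x hx
      obtain ⟨e, he, rfl⟩ := Multiset.mem_map.1 hx
      exact Γ.one_le_edge e he)
  simpa [delta] using h

lemma weight_le (Γ : Template) (e : ℕ × ℕ × ℕ) (he : e ∈ Γ.E) : e.2.2 ≤ Γ.delta + 1 := by
  have h : (e.2.1 - e.1) * e.2.2 - 1 ≤ Γ.delta :=
    Multiset.le_sum_of_mem (Multiset.mem_map_of_mem (fun e => (e.2.1 - e.1) * e.2.2 - 1) he)
  have h3 : e.2.2 ≤ (e.2.1 - e.1) * e.2.2 :=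
    Nat.le_mul_of_pos_left _ (Nat.sub_pos_of_lt (Γ.h_edge e he).1)
  omega

end Template

/-- For every `δ₀ ≥ 1`, the set of templates with cogenus `δ₀` is finite. -/
theorem templates_of_fixed_cogenus_finite (δ₀ : ℕ) (hδ₀ : 1 ≤ δ₀) :
    {Γ : Template | Γ.delta = δ₀}.Finite := by
  let R := Finset.range (δ₀ + 2)
  let B : Multiset (ℕ × ℕ × ℕ) := δ₀ • (R ×ˢ R ×ˢ R).val
  refine Set.Finite.of_injOn (f := fun Γ : Template => (Γ.l, Γ.E))
    (t := Set.Iic (δ₀ + 1) ×ˢ Set.Iic B) ?_ ?_ ((Set.finite_Iic _).prod (Set.finite_Iic _))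
  · rintro Γ rfl
    refine ⟨Γ.l_le, Multiset.le_iff_count.2 fun e => ?_⟩
    by_cases he : e ∈ Γ.E
    · have hl := Γ.l_le
      have hw := Γ.weight_le e he
      obtain ⟨h1, h2, -⟩ := Γ.h_edge e he
      have hm : e ∈ R ×ˢ R ×ˢ R := by
        simp only [R, Finset.mem_product, Finset.mem_range]
        omega
      have hc : Multiset.count e B = Γ.delta := by
        simp only [B, Multiset.count_nsmul]
        rw [Multiset.count_eq_one_of_mem (Finset.nodup _) hm, mul_one]
      rw [hc]
      exact (Multiset.count_le_card e _).trans Γ.card_le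
    · simp [Multiset.count_eq_zero_of_notMem he]
  · rintro ⟨l, E, _, _, _, _, _⟩ - ⟨l', E', _, _, _, _, _⟩ - h
    simp only [Prod.mk.injEq] at h
    obtain ⟨rfl, rfl⟩ := h
    rfl
end

section
/- There are exactly 26 templates Γ with cogenus δ(Γ) = 3. -/
namespace Template

/-- The contribution `(j - i) * w - 1` of the edge `(i, j, w)` to the cogenus. -/
def edgeDelta (e : ℕ × ℕ × ℕ) : ℕ := (e.2.1 - e.1) * e.2.2 - 1

/-- The pair `(l, E)` satisfies the axioms of a template and has cogenus `3`. The inner vertices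
range over a `Finset` so that the predicate is decidable. -/
def IsCogenusThree (p : ℕ × Multiset (ℕ × ℕ × ℕ)) : Prop :=
  1 ≤ p.1 ∧ p.2 ≠ 0 ∧ (∀ e ∈ p.2, e.1 < e.2.1 ∧ e.2.1 ≤ p.1 ∧ 1 ≤ e.2.2) ∧
    (∀ e ∈ p.2, e.2.1 = e.1 + 1 → 2 ≤ e.2.2) ∧
    (∀ v ∈ Finset.Icc 1 (p.1 - 1), ∃ e ∈ p.2, e.1 < v ∧ v < e.2.1) ∧
    (p.2.map edgeDelta).sum = 3

instance : DecidablePred IsCogenusThree := fun p =>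
  have (v : ℕ) : Decidable (∃ e ∈ p.2, e.1 < v ∧ v < e.2.1) := Multiset.decidableExistsMultiset
  inferInstanceAs (Decidable (_ ∧ _ ∧ _ ∧ _ ∧ _ ∧ _))

/-- The edges on the vertices `0, …, l` with cogenus contribution `k`, for `1 ≤ k ≤ 3`
(the bound `w ≤ 4` loses nothing for these `k`). -/
def edgesOf (l k : ℕ) : Finset (ℕ × ℕ × ℕ) :=
  (Finset.range l ×ˢ (Finset.Icc 1 l ×ˢ Finset.Icc 1 4)).filter
    (fun e => e.1 < e.2.1 ∧ edgeDelta e = k)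

/-- The edge multisets of the templates of length `l` and cogenus `3`, sorted by the partition
`3`, `2 + 1` or `1 + 1 + 1` given by the contributions of the edges. Filtering before taking images,
and a union over the first of three edges, keep the lists in the kernel computation short. -/
def edgeMultisets (l : ℕ) : Finset (Multiset (ℕ × ℕ × ℕ)) :=
  ((edgesOf l 3).filter fun a => IsCogenusThree (l, {a})).image (fun a => {a}) ∪
    ((edgesOf l 2 ×ˢ edgesOf l 1).filter fun q => IsCogenusThree (l, {q.1, q.2})).image
      (fun q => {q.1, q.2}) ∪
    (edgesOf l 1).biUnion fun a =>
      ((edgesOf l 1 ×ˢ edgesOf l 1).filter fun q => IsCogenusThree (l, {a, q.1, q.2})).image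
        (fun q => {a, q.1, q.2})

/-- The pairs `(l, E)` with `l ≤ 4` that are templates of cogenus `3`. -/
def candidates : Finset (ℕ × Multiset (ℕ × ℕ × ℕ)) :=
  (Finset.Icc 1 4).biUnion fun l => (edgeMultisets l).image fun E => (l, E)

theorem card_candidates : candidates.card = 26 := by
  decide +kernel

/-- A set of vertices covered by the interiors of the edges in `E` has at most as many elements as
the total contribution of `E` to the cogenus: an edge `(i, j, w)` with `w ≥ 1` covers
`j - i - 1 ≤ (j - i) * w - 1` vertices. -/
theorem card_le_sum_of_cover (E : Multiset (ℕ × ℕ × ℕ)) (hw : ∀ e ∈ E, 1 ≤ e.2.2) :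
    ∀ S : Finset ℕ, (∀ v ∈ S, ∃ e ∈ E, e.1 < v ∧ v < e.2.1) →
      S.card ≤ (E.map edgeDelta).sum := by
  induction E using Multiset.induction_on with
  | empty =>
    intro S hS
    have : S = ∅ := Finset.eq_empty_of_forall_notMem fun v hv => by simpa using hS v hv
    simp [this]
  | cons a E ih =>
    intro S hS
    have h1 := ih (fun e he => hw e (Multiset.mem_cons_of_mem he))
      (S \ Finset.Ioo a.1 a.2.1) (by
        intro v hv
        rw [Finset.mem_sdiff, Finset.mem_Ioo] at hv
        obtain ⟨e, he, h⟩ := hS v hv.1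
        rcases Multiset.mem_cons.1 he with rfl | he
        · exact absurd h hv.2
        · exact ⟨e, he, h⟩)
    have h2 := Finset.le_card_sdiff (Finset.Ioo a.1 a.2.1) S
    rw [Nat.card_Ioo] at h2
    have h3 : a.2.1 - a.1 ≤ (a.2.1 - a.1) * a.2.2 :=
      Nat.le_mul_of_pos_right _ (hw a (Multiset.mem_cons_self a E))
    rw [Multiset.map_cons, Multiset.sum_cons]
    unfold edgeDelta at h1 ⊢
    omega

theorem edgeDelta_pos {e : ℕ × ℕ × ℕ} (h : e.1 < e.2.1) (hw : 1 ≤ e.2.2)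
    (hs : e.2.1 = e.1 + 1 → 2 ≤ e.2.2) : 1 ≤ edgeDelta e := by
  have : 2 ≤ (e.2.1 - e.1) * e.2.2 := by
    by_cases h1 : e.2.1 = e.1 + 1
    · simpa [h1] using hs h1
    · exact (by omega : 2 ≤ e.2.1 - e.1).trans (Nat.le_mul_of_pos_right _ hw)
  unfold edgeDelta
  omega

/-- A multiset with positive integer values summing to `3` realizes one of the partitions
`3`, `2 + 1`, `1 + 1 + 1`. -/
theorem eq_of_sum_eq_three {α : Type*} (f : α → ℕ) (E : Multiset α) (hpos : ∀ e ∈ E, 1 ≤ f e)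
    (hsum : (E.map f).sum = 3) :
    (∃ a, E = {a} ∧ f a = 3) ∨ (∃ a b, E = {a, b} ∧ f a = 2 ∧ f b = 1) ∨
      ∃ a b c, E = {a, b, c} ∧ f a = 1 ∧ f b = 1 ∧ f c = 1 := by
  have hcard : E.card ≤ 3 := by
    have := Multiset.card_nsmul_le_sum (s := E.map f) (a := 1) (by simpa using hpos)
    simpa [hsum] using this
  have : E.card = 0 ∨ E.card = 1 ∨ E.card = 2 ∨ E.card = 3 := by omega
  rcases this with h | h | h | h
  · simp [Multiset.card_eq_zero.1 h] at hsum
  · obtain ⟨a, rfl⟩ := Multiset.card_eq_one.1 h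
    exact Or.inl ⟨a, rfl, by simpa using hsum⟩
  · obtain ⟨a, b, rfl⟩ := Multiset.card_eq_two.1 h
    have ha := hpos a (by simp)
    have hb := hpos b (by simp)
    simp only [Multiset.insert_eq_cons, Multiset.map_cons, Multiset.map_singleton,
      Multiset.sum_cons, Multiset.sum_singleton] at hsum
    by_cases h2 : f a = 2
    · exact Or.inr (Or.inl ⟨a, b, rfl, h2, by omega⟩)
    · exact Or.inr (Or.inl ⟨b, a, Multiset.pair_comm a b, by omega, by omega⟩)
  · obtain ⟨a, b, c, rfl⟩ := Multiset.card_eq_three.1 h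
    have ha := hpos a (by simp)
    have hb := hpos b (by simp)
    have hc := hpos c (by simp)
    simp only [Multiset.insert_eq_cons, Multiset.map_cons, Multiset.map_singleton,
      Multiset.sum_cons, Multiset.sum_singleton] at hsum
    exact Or.inr (Or.inr ⟨a, b, c, rfl, by omega, by omega, by omega⟩)

theorem mem_edgesOf {l : ℕ} {e : ℕ × ℕ × ℕ} {k : ℕ} (h : e.1 < e.2.1) (hj : e.2.1 ≤ l)
    (hw : 1 ≤ e.2.2) (hk : edgeDelta e = k) (hk3 : k ≤ 3) : e ∈ edgesOf l k := by
  have h1 : e.2.2 ≤ (e.2.1 - e.1) * e.2.2 := Nat.le_mul_of_pos_left _ (by omega)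
  have h2 : (e.2.1 - e.1) * e.2.2 - 1 = k := hk
  simp only [edgesOf, Finset.mem_filter, Finset.mem_product, Finset.mem_range, Finset.mem_Icc]
  exact ⟨⟨by omega, ⟨by omega, hj⟩, hw, by omega⟩, h, hk⟩

theorem mem_edgeMultisets {l : ℕ} {E : Multiset (ℕ × ℕ × ℕ)} :
    E ∈ edgeMultisets l ↔ IsCogenusThree (l, E) := by
  unfold edgeMultisets
  rw [Finset.mem_union, Finset.mem_union, or_assoc]
  simp only [Finset.mem_biUnion, Finset.mem_image, Finset.mem_filter]
  constructor
  · rintro (⟨_, ⟨_, h⟩, rfl⟩ | ⟨_, ⟨_, h⟩, rfl⟩ | ⟨_, _, _, ⟨_, h⟩, rfl⟩) <;> exact h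
  intro h
  obtain ⟨-, -, hedge, hshort, -, hsum⟩ := id h
  dsimp only at hedge hshort hsum
  have hmem : ∀ e ∈ E, ∀ k ≤ 3, edgeDelta e = k → e ∈ edgesOf l k := fun e he k hk hek =>
    mem_edgesOf (hedge e he).1 (hedge e he).2.1 (hedge e he).2.2 hek hk
  have hpos : ∀ e ∈ E, 1 ≤ edgeDelta e := fun e he =>
    edgeDelta_pos (hedge e he).1 (hedge e he).2.2 (hshort e he)
  rcases eq_of_sum_eq_three edgeDelta E hpos hsum with
    ⟨a, rfl, ha⟩ | ⟨a, b, rfl, ha, hb⟩ | ⟨a, b, c, rfl, ha, hb, hc⟩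
  · exact Or.inl ⟨a, ⟨hmem a (by simp) 3 (by simp) ha, h⟩, rfl⟩
  · exact Or.inr (Or.inl ⟨(a, b), ⟨Finset.mk_mem_product
      (hmem a (by simp) 2 (by simp) ha) (hmem b (by simp) 1 (by simp) hb), h⟩, rfl⟩)
  · exact Or.inr (Or.inr ⟨a, hmem a (by simp) 1 (by simp) ha, (b, c), ⟨Finset.mk_mem_product
      (hmem b (by simp) 1 (by simp) hb) (hmem c (by simp) 1 (by simp) hc), h⟩, rfl⟩)

theorem mem_candidates {p : ℕ × Multiset (ℕ × ℕ × ℕ)} :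
    p ∈ candidates ↔ IsCogenusThree p := by
  unfold candidates
  simp only [Finset.mem_biUnion, Finset.mem_image, mem_edgeMultisets]
  constructor
  · rintro ⟨l, -, E, h, rfl⟩
    exact h
  intro h
  obtain ⟨hl, -, hedge, -, hcover, hsum⟩ := id h
  have hl4 : p.1 ≤ 4 := by
    have := card_le_sum_of_cover p.2 (fun e he => (hedge e he).2.2) _ hcover
    rw [Nat.card_Icc, hsum] at this
    omega
  exact ⟨p.1, Finset.mem_Icc.2 ⟨hl, hl4⟩, p.2, h, rfl⟩

end Template

/-- There are exactly 26 templates with cogenus 3. -/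
theorem templates_of_cogenus_three :
    {Γ : Template | Γ.delta = 3}.ncard = 26 := by
  have hinj : Function.Injective fun Γ : Template => (Γ.l, Γ.E) := by
    rintro ⟨l, E⟩ ⟨l', E'⟩ h
    simpa using h
  have himage : (fun Γ : Template => (Γ.l, Γ.E)) '' {Γ : Template | Γ.delta = 3} =
      ↑Template.candidates := by
    ext p
    rw [Finset.mem_coe, Template.mem_candidates]
    constructor
    · rintro ⟨Γ, hΓ, rfl⟩
      exact ⟨Γ.hl, Γ.hE, Γ.h_edge, Γ.h_short,
        fun v hv => Γ.h_cover v (Finset.mem_Icc.1 hv).1 (Finset.mem_Icc.1 hv).2, hΓ⟩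
    · rintro ⟨hl, hE, hedge, hshort, hcover, hsum⟩
      exact ⟨⟨p.1, p.2, hl, hE, hedge, hshort,
        fun v h1 h2 => hcover v (Finset.mem_Icc.2 ⟨h1, h2⟩)⟩, hsum, rfl⟩
  rw [← Set.ncard_image_of_injective _ hinj, himage, Set.ncard_coe_finset,
    Template.card_candidates]
end
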